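/- Let SU(2) act diagonally on V = ℂ² ⊕ ℂ² (standard action on each factor), with moment map J : V → su(2)*, J(v,w)(ξ) = Im(⟨ξv, v⟩ + ⟨ξw, w⟩) for ξ ∈ su(2), where ⟨u,v⟩ = Σᵢ uᵢ\overline{vᵢ}, and set M = J⁻¹(0), M₀ = M/SU(2). Let Γ = {±1} act on ℂ by multiplication, with orbit space ℂ/Γ. Then there exists a ℤ-graded regular diffeomorphism from M₀ to ℂ/Γ. -/

import Mathlib

/-!
Statement 15: The symplectic quotient of the diagonal SU(2)-action on ℂ² ⊕ ℂ² (the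
SU(2)-module 2R₁), with moment map `J(v,w)(ξ) = Im(⟨ξv,v⟩ + ⟨ξw,w⟩)`, is ℤ-graded
regularly diffeomorphic to `ℂ/{±1}`.
-/

namespace Stmt15

noncomputable section

open MvPolynomial Complex

/-- Evaluation of a real polynomial in the real coordinates (indexed by `ι × Bool`) at a
point of `ι → ℂ`. -/
def evalR {ι : Type} (p : MvPolynomial (ι × Bool) ℝ) (z : ι → ℂ) : ℝ :=
  MvPolynomial.eval (fun q => if q.2 then (z q.1).im else (z q.1).re) p

/-- Membership in SU(2). -/
def SU2mem (g : Matrix (Fin 2) (Fin 2) ℂ) : Prop :=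
  g ∈ Matrix.unitaryGroup (Fin 2) ℂ ∧ g.det = 1

/-- The diagonal action of a matrix `g` on ℂ² ⊕ ℂ². -/
def act (g : Matrix (Fin 2) (Fin 2) ℂ) (z : (Fin 2 → ℂ) × (Fin 2 → ℂ)) :
    (Fin 2 → ℂ) × (Fin 2 → ℂ) :=
  (g.mulVec z.1, g.mulVec z.2)

/-- Hermitian pairing `⟨ξ v, v⟩`. -/
def pair (ξ : Matrix (Fin 2) (Fin 2) ℂ) (v : Fin 2 → ℂ) : ℂ :=
  ∑ i, ξ.mulVec v i * (starRingEnd ℂ) (v i)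

/-- The zero set `M = J⁻¹(0)` of the moment map `J(v,w)(ξ) = Im(⟨ξv,v⟩ + ⟨ξw,w⟩)`, `ξ`
ranging over `su(2)` (traceless skew-hermitian matrices). -/
def Mset : Set ((Fin 2 → ℂ) × (Fin 2 → ℂ)) :=
  {z | ∀ ξ : Matrix (Fin 2) (Fin 2) ℂ, ξ.trace = 0 → star ξ = -ξ →
    (pair ξ z.1 + pair ξ z.2).im = 0}

/-- Orbit equivalence on `M` for the SU(2)-action. -/
def relM (x y : Mset) : Prop :=
  ∃ g : Matrix (Fin 2) (Fin 2) ℂ, SU2mem g ∧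
    (y : (Fin 2 → ℂ) × (Fin 2 → ℂ)) = act g (x : (Fin 2 → ℂ) × (Fin 2 → ℂ))

/-- The symplectic quotient `M₀ = M/SU(2)` with the quotient topology. -/
def M₀ : Type := Quot relM

instance : TopologicalSpace M₀ := instTopologicalSpaceQuot

/-- The complex coordinates of a point of ℂ² ⊕ ℂ². -/
def cc (z : (Fin 2 → ℂ) × (Fin 2 → ℂ)) : Fin 2 ⊕ Fin 2 → ℂ := Sum.elim z.1 z.2

/-- The degree-`d` regular functions on `M₀`. -/
def RegM (d : ℕ) : Set (M₀ → ℝ) :=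
  {f | ∃ p : MvPolynomial ((Fin 2 ⊕ Fin 2) × Bool) ℝ, p.IsHomogeneous d ∧
    (∀ g : Matrix (Fin 2) (Fin 2) ℂ, SU2mem g → ∀ z : (Fin 2 → ℂ) × (Fin 2 → ℂ),
      evalR p (cc (act g z)) = evalR p (cc z)) ∧
    ∀ x : Mset, f (Quot.mk _ x) = evalR p (cc (x : (Fin 2 → ℂ) × (Fin 2 → ℂ)))}

/-- Orbit equivalence on ℂ for the action of `Γ = {±1}`. -/
def relC (z v : ℂ) : Prop := v = z ∨ v = -z

/-- The orbifold `ℂ/{±1}` with the quotient topology. -/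
def Y : Type := Quot relC

instance : TopologicalSpace Y := instTopologicalSpaceQuot

/-- The degree-`d` regular functions on `ℂ/{±1}`. -/
def RegY (d : ℕ) : Set (Y → ℝ) :=
  {f | ∃ p : MvPolynomial (Unit × Bool) ℝ, p.IsHomogeneous d ∧
    (∀ z : ℂ, evalR p (fun _ => -z) = evalR p (fun _ => z)) ∧
    ∀ z : ℂ, f (Quot.mk _ z) = evalR p (fun _ => z)}

/-- The determinant invariant. -/
def detz (z : (Fin 2 → ℂ) × (Fin 2 → ℂ)) : ℂ := z.1 0 * z.2 1 - z.2 0 * z.1 1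

/-- The norm invariant. -/
def nrm (z : (Fin 2 → ℂ) × (Fin 2 → ℂ)) : ℝ :=
  (normSq (z.1 0) + normSq (z.1 1) + normSq (z.2 0) + normSq (z.2 1)) / 2

/-- The matrix with columns `z.1`, `z.2`. -/
def mat (z : (Fin 2 → ℂ) × (Fin 2 → ℂ)) : Matrix (Fin 2) (Fin 2) ℂ :=
  !![z.1 0, z.2 0; z.1 1, z.2 1]

lemma mat_inj {x y : (Fin 2 → ℂ) × (Fin 2 → ℂ)} (h : mat x = mat y) : x = y := by
  have h00 := congrFun (congrFun h 0) 0
  have h01 := congrFun (congrFun h 0) 1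
  have h10 := congrFun (congrFun h 1) 0
  have h11 := congrFun (congrFun h 1) 1
  simp [mat] at h00 h01 h10 h11
  ext i <;> fin_cases i <;> simp [*]

lemma mat_act (g : Matrix (Fin 2) (Fin 2) ℂ) (z) : mat (act g z) = g * mat z := by
  ext i j; fin_cases i <;> fin_cases j <;>
    simp [mat, act, Matrix.mul_apply, Matrix.mulVec, dotProduct, Fin.sum_univ_two]

lemma det_mat (z) : (mat z).det = detz z := by
  simp [mat, detz, Matrix.det_fin_two]

lemma trace_mat (z) : (Matrix.trace (star (mat z) * mat z)) = ((2 * nrm z : ℝ) : ℂ) := by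
  simp [Matrix.trace, Fin.sum_univ_two, Matrix.mul_apply, mat, nrm, Matrix.star_apply,
    Complex.normSq_eq_conj_mul_self]
  ring

lemma detz_act {g : Matrix (Fin 2) (Fin 2) ℂ} (hg : SU2mem g) (z) :
    detz (act g z) = detz z := by
  rw [← det_mat, mat_act, Matrix.det_mul, hg.2, one_mul, det_mat]

lemma nrm_act {g : Matrix (Fin 2) (Fin 2) ℂ} (hg : SU2mem g) (z) :
    nrm (act g z) = nrm z := by
  have h := trace_mat (act g z)
  rw [mat_act, star_mul, mul_assoc, ← mul_assoc (star g),
    Matrix.mem_unitaryGroup_iff'.1 hg.1, one_mul, trace_mat] at h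
  have := Complex.ofReal_injective h
  linarith

lemma mset_mul {z} (hz : z ∈ Mset) : mat z * star (mat z) = ((nrm z : ℝ) : ℂ) • 1 := by
  have h1 := hz !![I, 0; 0, -I] (by simp [Matrix.trace, Fin.sum_univ_two])
    (by ext i j; fin_cases i <;> fin_cases j <;> simp [Matrix.star_apply])
  have h2 := hz !![0, 1; -1, 0] (by simp [Matrix.trace, Fin.sum_univ_two])
    (by ext i j; fin_cases i <;> fin_cases j <;> simp [Matrix.star_apply])
  have h3 := hz !![0, I; I, 0] (by simp [Matrix.trace, Fin.sum_univ_two])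
    (by ext i j; fin_cases i <;> fin_cases j <;> simp [Matrix.star_apply])
  simp [pair, Matrix.mulVec, dotProduct, Fin.sum_univ_two] at h1 h2 h3
  ext i j
  fin_cases i <;> fin_cases j <;> apply Complex.ext <;>
    simp [mat, Matrix.mul_apply, Matrix.star_apply, nrm, Fin.sum_univ_two, normSq_apply] <;>
    linarith

lemma mset_of_mul {z} {c : ℝ} (h : mat z * star (mat z) = (c : ℂ) • 1) : z ∈ Mset := by
  have h00 := congrFun (congrFun h 0) 0
  have h01 := congrFun (congrFun h 0) 1
  have h10 := congrFun (congrFun h 1) 0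
  have h11 := congrFun (congrFun h 1) 1
  simp [mat, Matrix.mul_apply, Matrix.star_apply, Fin.sum_univ_two] at h00 h01 h10 h11
  intro ξ htr _
  simp [Matrix.trace, Fin.sum_univ_two] at htr
  have : pair ξ z.1 + pair ξ z.2 = 0 := by
    simp only [pair, Matrix.mulVec, dotProduct, Fin.sum_univ_two]
    linear_combination ξ 0 0 * h00 + ξ 0 1 * h10 + ξ 1 0 * h01 + ξ 1 1 * h11 + (c : ℂ) * htr
  rw [this]; simp

lemma nrm_nonneg (z) : 0 ≤ nrm z := by
  unfold nrm
  have := normSq_nonneg (z.1 0)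
  have := normSq_nonneg (z.1 1)
  have := normSq_nonneg (z.2 0)
  have := normSq_nonneg (z.2 1)
  linarith

lemma mset_nrm {z} (hz : z ∈ Mset) : nrm z = ‖detz z‖ := by
  have h := congrArg Matrix.det (mset_mul hz)
  rw [Matrix.det_mul, Matrix.star_eq_conjTranspose, Matrix.det_conjTranspose, det_mat,
    Matrix.det_smul, Matrix.det_one] at h
  simp only [Fintype.card_fin, mul_one] at h
  have h' := congrArg norm h
  simp at h'
  have := nrm_nonneg z
  have h2 := norm_nonneg (detz z)
  nlinarith

lemma zero_of_nrm {z} (h : nrm z = 0) : z = 0 := by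
  unfold nrm at h
  have h1 := normSq_nonneg (z.1 0)
  have h2 := normSq_nonneg (z.1 1)
  have h3 := normSq_nonneg (z.2 0)
  have h4 := normSq_nonneg (z.2 1)
  have e1 : z.1 0 = 0 := normSq_eq_zero.1 (by linarith)
  have e2 : z.1 1 = 0 := normSq_eq_zero.1 (by linarith)
  have e3 : z.2 0 = 0 := normSq_eq_zero.1 (by linarith)
  have e4 : z.2 1 = 0 := normSq_eq_zero.1 (by linarith)
  ext i <;> fin_cases i <;> simp [*]

lemma one_SU2 : SU2mem 1 := ⟨one_mem _, by simp⟩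

lemma orbit {x y : Mset} (h : detz x.1 = detz y.1) : relM x y := by
  have hn : nrm x.1 = nrm y.1 := by rw [mset_nrm x.2, mset_nrm y.2, h]
  by_cases h0 : nrm x.1 = 0
  · refine ⟨1, one_SU2, ?_⟩
    have h0y : nrm y.1 = 0 := by rw [← hn]; exact h0
    rw [zero_of_nrm h0, zero_of_nrm h0y]
    simp [act]
    rfl
  have hc : ((nrm x.1 : ℝ) : ℂ) ≠ 0 := by exact_mod_cast h0
  have hx := mset_mul x.2
  have hy := mset_mul y.2
  rw [← hn] at hy
  set c : ℂ := ((nrm x.1 : ℝ) : ℂ) with hcdef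
  set A := mat x.1 with hA
  set B := mat y.1 with hB
  have hx1 : A * (c⁻¹ • star A) = 1 := by
    rw [mul_smul_comm, hx, smul_smul, inv_mul_cancel₀ hc, one_smul]
  have hx2 : (c⁻¹ • star A) * A = 1 := mul_eq_one_comm.1 hx1
  have hy1 : B * (c⁻¹ • star B) = 1 := by
    rw [mul_smul_comm, hy, smul_smul, inv_mul_cancel₀ hc, one_smul]
  have hgA : B * (c⁻¹ • star A) * A = B := by rw [mul_assoc, hx2, mul_one]
  have hsc : star c⁻¹ = c⁻¹ := by
    rw [hcdef]; simp
  refine ⟨B * (c⁻¹ • star A), ⟨?_, ?_⟩, ?_⟩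
  · rw [Matrix.mem_unitaryGroup_iff, star_mul, star_smul, star_star, hsc]
    calc B * (c⁻¹ • star A) * (c⁻¹ • A * star B)
        = B * ((c⁻¹ • star A) * A) * (c⁻¹ • star B) := by
          simp only [smul_mul_assoc, mul_smul_comm, mul_assoc]
      _ = 1 := by rw [hx2, mul_one, hy1]
  · have hd := congrArg Matrix.det hgA
    rw [Matrix.det_mul, hB, hA, det_mat, det_mat, h] at hd
    have : detz y.1 ≠ 0 := by
      intro h'
      apply h0
      rw [hn, mset_nrm y.2, h', norm_zero]
    exact mul_right_cancel₀ this (by rw [one_mul]; exact hd)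
  · apply mat_inj
    rw [mat_act]
    exact hgA.symm

/-- The Cartan slice. -/
def slice (z : ℂ) : (Fin 2 → ℂ) × (Fin 2 → ℂ) := (![z, 0], ![0, z])

lemma slice_mem (z : ℂ) : slice z ∈ Mset := by
  apply mset_of_mul (c := normSq z)
  ext i j
  fin_cases i <;> fin_cases j <;>
    simp [mat, slice, Matrix.mul_apply, Matrix.star_apply, Fin.sum_univ_two, mul_conj]

lemma detz_slice (z : ℂ) : detz (slice z) = z ^ 2 := by
  simp [detz, slice, sq]

/-- `det` on `M₀`. -/
def fM : M₀ → ℂ := Quot.lift (fun x : Mset => detz x.1) (by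
  rintro a b ⟨g, hg, h⟩
  rw [h, detz_act hg])

/-- Square on `Y`. -/
def fY : Y → ℂ := Quot.lift (fun z : ℂ => z ^ 2) (by
  rintro a b (h | h) <;> subst h <;> simp)

lemma continuous_detz : Continuous detz := by unfold detz; fun_prop

lemma continuous_slice : Continuous slice := by
  unfold slice
  refine Continuous.prodMk ?_ ?_ <;>
  · refine continuous_pi fun i => ?_
    fin_cases i <;> simp <;> fun_prop

lemma sq_quot : Topology.IsQuotientMap (fun z : ℂ => z ^ 2) :=
  (Complex.isOpenQuotientMap_pow 2).isQuotientMap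

lemma fM_cont : Continuous fM :=
  continuous_quot_lift _ (continuous_detz.comp continuous_subtype_val)

lemma fM_homeo : IsHomeomorph fM := by
  rw [isHomeomorph_iff_isQuotientMap_injective]
  constructor
  · refine Topology.IsQuotientMap.of_comp
      (f := fun z : ℂ => (Quot.mk relM ⟨slice z, slice_mem z⟩ : M₀)) ?_ fM_cont ?_
    · exact continuous_quot_mk.comp (continuous_slice.subtype_mk _)
    · convert sq_quot using 1
      funext z
      exact detz_slice z
  · intro a b
    induction a using Quot.ind
    induction b using Quot.ind
    intro h
    exact Quot.sound (orbit h)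

lemma fY_homeo : IsHomeomorph fY := by
  rw [isHomeomorph_iff_isQuotientMap_injective]
  constructor
  · refine Topology.IsQuotientMap.of_comp (f := fun z : ℂ => (Quot.mk relC z : Y)) ?_ ?_ sq_quot
    · exact continuous_quot_mk
    · exact continuous_quot_lift _ (continuous_pow 2)
  · intro a b
    induction a using Quot.ind
    induction b using Quot.ind
    intro h
    refine Quot.sound ?_
    rename_i a b
    rcases sq_eq_sq_iff_eq_or_eq_neg.1 (show a ^ 2 = b ^ 2 from h) with h | h
    · exact Or.inl h.symm
    · right; rw [h, neg_neg]

/-- The diffeomorphism. -/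
def chi : M₀ ≃ₜ Y := (fM_homeo.homeomorph).trans (fY_homeo.homeomorph).symm

lemma chi_mk (x : Mset) (z : ℂ) (h : z ^ 2 = detz x.1) :
    chi (Quot.mk _ x) = (Quot.mk relC z : Y) := by
  exact (Homeomorph.symm_apply_eq (IsHomeomorph.homeomorph fY fY_homeo)).2 h.symm

/-- Functions on ℂ that extend to invariant polynomials. -/
def Good (d : ℕ) (f : ℂ → ℝ) : Prop :=
  ∃ P : MvPolynomial ((Fin 2 ⊕ Fin 2) × Bool) ℝ, P.IsHomogeneous d ∧
    (∀ g : Matrix (Fin 2) (Fin 2) ℂ, SU2mem g → ∀ z : (Fin 2 → ℂ) × (Fin 2 → ℂ),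
      evalR P (cc (act g z)) = evalR P (cc z)) ∧
    ∀ x : Mset, ∀ z : ℂ, z ^ 2 = detz x.1 → evalR P (cc x.1) = f z

lemma Good.mul {d e : ℕ} {f g : ℂ → ℝ} (hf : Good d f) (hg : Good e g) :
    Good (d + e) (fun z => f z * g z) := by
  obtain ⟨P, h1, h2, h3⟩ := hf
  obtain ⟨Q, k1, k2, k3⟩ := hg
  simp only [evalR] at *
  refine ⟨P * Q, h1.mul k1, ?_, ?_⟩
  · intro g hg z
    simp only [evalR, map_mul, h2 g hg, k2 g hg]
  · intro x z h
    simp only [evalR, map_mul, h3 x z h, k3 x z h]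

lemma Good.add {d : ℕ} {f g : ℂ → ℝ} (hf : Good d f) (hg : Good d g) :
    Good d (fun z => f z + g z) := by
  obtain ⟨P, h1, h2, h3⟩ := hf
  obtain ⟨Q, k1, k2, k3⟩ := hg
  simp only [evalR] at *
  refine ⟨P + Q, h1.add k1, ?_, ?_⟩
  · intro g hg z
    simp only [evalR, map_add, h2 g hg, k2 g hg]
  · intro x z h
    simp only [evalR, map_add, h3 x z h, k3 x z h]

lemma Good.const (c : ℝ) : Good 0 (fun _ => c) :=
  ⟨C c, isHomogeneous_C _ _, by simp [evalR], by simp [evalR]⟩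

lemma Good.zero (d : ℕ) : Good d (fun _ => 0) :=
  ⟨0, isHomogeneous_zero _ _ _, by simp [evalR], by simp [evalR]⟩

lemma Good.smul {d : ℕ} {f : ℂ → ℝ} (c : ℝ) (hf : Good d f) : Good d (fun z => c * f z) := by
  have := (Good.const c).mul hf
  rwa [zero_add] at this

lemma Good.sum {d : ℕ} {ι : Type*} (s : Finset ι) (f : ι → ℂ → ℝ) (h : ∀ i ∈ s, Good d (f i)) :
    Good d (fun z => ∑ i ∈ s, f i z) := by
  classical
  induction s using Finset.induction_on with
  | empty => simpa using Good.zero d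
  | insert a s ha ih =>
    simp only [Finset.sum_insert ha]
    exact (h a (by simp)).add (ih fun i hi => h i (by simp [hi]))

lemma isHom_XX (i j : (Fin 2 ⊕ Fin 2) × Bool) :
    (X i * X j : MvPolynomial ((Fin 2 ⊕ Fin 2) × Bool) ℝ).IsHomogeneous 2 :=
  (isHomogeneous_X ℝ i).mul (isHomogeneous_X ℝ j)

lemma good_re : Good 2 (fun z => (z ^ 2).re) := by
  let P : MvPolynomial ((Fin 2 ⊕ Fin 2) × Bool) ℝ :=
    (X (.inl 0, false) * X (.inr 1, false) - X (.inl 0, true) * X (.inr 1, true))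
    - (X (.inr 0, false) * X (.inl 1, false) - X (.inr 0, true) * X (.inl 1, true))
  have hP : ∀ z, evalR P (cc z) = (detz z).re := by
    intro z; simp [P, evalR, cc, detz]
  refine ⟨P, ((isHom_XX _ _).sub (isHom_XX _ _)).sub ((isHom_XX _ _).sub (isHom_XX _ _)), ?_, ?_⟩
  · intro g hg z; rw [hP, hP, detz_act hg]
  · intro x z h; simp only [hP, h]

lemma good_im : Good 2 (fun z => (z ^ 2).im) := by
  let P : MvPolynomial ((Fin 2 ⊕ Fin 2) × Bool) ℝ :=
    (X (.inl 0, false) * X (.inr 1, true) + X (.inl 0, true) * X (.inr 1, false))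
    - (X (.inr 0, false) * X (.inl 1, true) + X (.inr 0, true) * X (.inl 1, false))
  have hP : ∀ z, evalR P (cc z) = (detz z).im := by
    intro z; simp [P, evalR, cc, detz]
  refine ⟨P, ((isHom_XX _ _).add (isHom_XX _ _)).sub ((isHom_XX _ _).add (isHom_XX _ _)), ?_, ?_⟩
  · intro g hg z; rw [hP, hP, detz_act hg]
  · intro x z h; simp only [hP, h]

lemma good_norm : Good 2 (fun z => normSq z) := by
  let P : MvPolynomial ((Fin 2 ⊕ Fin 2) × Bool) ℝ :=
    C (1 / 2) * ∑ i, X i * X i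
  have hP : ∀ z, evalR P (cc z) = nrm z := by
    intro z
    simp [P, evalR, cc, nrm, Fintype.sum_prod_type, normSq_apply]
    ring
  refine ⟨P, (IsHomogeneous.sum _ _ _ fun i _ => isHom_XX i i).C_mul _, ?_, ?_⟩
  · intro g hg z; rw [hP, hP, nrm_act hg]
  · intro x z h; rw [hP, mset_nrm x.2, ← h, norm_pow]; exact (normSq_eq_norm_sq z).symm

lemma good_xx : Good 2 (fun z => z.re * z.re) := by
  convert (good_norm.add good_re).smul (1 / 2) using 2 with z
  simp [sq, normSq_apply]; ring

lemma good_yy : Good 2 (fun z => z.im * z.im) := by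
  convert (good_norm.add (good_re.smul (-1))).smul (1 / 2) using 2 with z
  simp [sq, normSq_apply]; ring

lemma good_xy : Good 2 (fun z => z.re * z.im) := by
  convert good_im.smul (1 / 2) using 2 with z
  simp [sq]; ring

lemma good_mon : ∀ (k a b : ℕ), a + b = 2 * k → Good (2 * k) (fun z => z.re ^ a * z.im ^ b) := by
  intro k
  induction k with
  | zero =>
    intro a b h
    obtain ⟨rfl, rfl⟩ : a = 0 ∧ b = 0 := by omega
    simpa using Good.const 1
  | succ k ih =>
    intro a b h
    rcases a with _ | _ | a
    · obtain ⟨b, rfl⟩ : ∃ b', b = b' + 2 := ⟨b - 2, by omega⟩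
      convert (ih 0 b (by omega)).mul good_yy using 2 with z <;> ring
    · obtain ⟨b, rfl⟩ : ∃ b', b = b' + 1 := ⟨b - 1, by omega⟩
      convert (ih 0 b (by omega)).mul good_xy using 2 with z <;> ring
    · convert (ih a b (by omega)).mul good_xx using 2 with z <;> ring

lemma evalR_eq (p : MvPolynomial (Unit × Bool) ℝ) (z : ℂ) : evalR p (fun _ => z) =
    ∑ m ∈ p.support, p.coeff m * (z.re ^ m ((), false) * z.im ^ m ((), true)) := by
  rw [evalR, MvPolynomial.eval_eq']
  refine Finset.sum_congr rfl fun m _ => ?_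
  simp [Fintype.prod_prod_type, mul_comm]

lemma deg_eq {d : ℕ} {p : MvPolynomial (Unit × Bool) ℝ} (hp : p.IsHomogeneous d) {m}
    (hm : m ∈ p.support) : m ((), false) + m ((), true) = d := by
  have := hp.degree_eq_sum_deg_support hm
  rw [this, ← Finsupp.degree_apply, Finsupp.degree_eq_sum]
  simp [Fintype.sum_prod_type, add_comm]

lemma good_poly {d : ℕ} {p : MvPolynomial (Unit × Bool) ℝ} (hp : p.IsHomogeneous d)
    (hinv : ∀ z : ℂ, evalR p (fun _ => -z) = evalR p (fun _ => z)) :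
    Good d (fun z => evalR p (fun _ => z)) := by
  rcases Nat.even_or_odd' d with ⟨k, rfl | rfl⟩
  · simp only [evalR_eq]
    refine Good.sum _ _ fun m hm => ?_
    exact (good_mon k _ _ (deg_eq hp hm)).smul _
  · have : (fun z : ℂ => evalR p (fun _ => z)) = fun _ => 0 := by
      funext z
      have h1 := hinv z
      have h2 : evalR p (fun _ => -z) = - evalR p (fun _ => z) := by
        rw [evalR_eq, evalR_eq, ← Finset.sum_neg_distrib]
        refine Finset.sum_congr rfl fun m hm => ?_
        have hd := deg_eq hp hm
        rw [neg_re, neg_im, neg_pow, neg_pow z.im]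
        have : (-1 : ℝ) ^ m ((), false) * (-1) ^ m ((), true) = -1 := by
          rw [← pow_add, hd]; simp [pow_succ, pow_mul]
        linear_combination (p.coeff m * z.re ^ m ((), false) * z.im ^ m ((), true)) * this
      linarith
    rw [this]
    exact Good.zero _

/-- Coordinates of the slice as linear polynomials. -/
def sub : (Fin 2 ⊕ Fin 2) × Bool → MvPolynomial (Unit × Bool) ℝ
  | (.inl i, b) => if i = 0 then X ((), b) else 0
  | (.inr i, b) => if i = 1 then X ((), b) else 0

lemma sub_hom (q) : (sub q).IsHomogeneous 1 := by
  rcases q with ⟨i | i, b⟩ <;> simp only [sub] <;> split_ifs <;>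
    first | exact isHomogeneous_X _ _ | exact isHomogeneous_zero _ _ _

lemma evalR_sub (P : MvPolynomial ((Fin 2 ⊕ Fin 2) × Bool) ℝ) (z : ℂ) :
    evalR (aeval sub P) (fun _ => z) = evalR P (cc (slice z)) := by
  unfold evalR
  rw [← MvPolynomial.coe_aeval_eq_eval, ← MvPolynomial.coe_aeval_eq_eval]
  simp only [RingHom.coe_coe]
  rw [← AlgHom.comp_apply, MvPolynomial.comp_aeval]
  congr 2
  funext q
  rcases q with ⟨i | i, b⟩ <;> fin_cases i <;> simp [sub, cc, slice]

lemma neg_SU2 : SU2mem (-1) := by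
  refine ⟨?_, by simp [Matrix.det_fin_two]⟩
  rw [Matrix.mem_unitaryGroup_iff]; simp

lemma act_neg (z : ℂ) : act (-1) (slice z) = slice (-z) := by
  apply mat_inj
  rw [mat_act]
  ext i j; fin_cases i <;> fin_cases j <;> simp [mat, slice]

/-- The symplectic quotient of 2R₁ admits a ℤ-graded regular diffeomorphism to `ℂ/{±1}`. -/
theorem graded_regular_diffeomorphism_2R1_to_C_mod_pm1 :
    ∃ χ : M₀ ≃ₜ Y, ∀ d : ℕ, (fun f : Y → ℝ => f ∘ ⇑χ) '' RegY d = RegM d := by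
  refine ⟨chi, fun d => Set.Subset.antisymm ?_ ?_⟩
  · rintro _ ⟨f, ⟨p, hp, hinv, hf⟩, rfl⟩
    obtain ⟨P, hP, hPi, hPe⟩ := good_poly hp hinv
    refine ⟨P, hP, hPi, fun x => ?_⟩
    obtain ⟨z, hz⟩ := sq_quot.surjective (detz x.1)
    refine Eq.trans ?_ (hPe x z hz).symm
    exact (congrArg f (chi_mk x z hz)).trans (hf z)
  · rintro f ⟨P, hP, hPi, hPe⟩
    refine ⟨f ∘ chi.symm, ⟨aeval sub P, ?_, ?_, ?_⟩, ?_⟩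
    · have := hP.aeval sub sub_hom
      rwa [one_mul] at this
    · intro z
      rw [evalR_sub, evalR_sub, ← act_neg, hPi _ neg_SU2]
    · intro z
      rw [evalR_sub, ← hPe ⟨slice z, slice_mem z⟩]
      exact congrArg f ((Homeomorph.symm_apply_eq _).2
        (chi_mk ⟨slice z, slice_mem z⟩ z (detz_slice z).symm).symm)
    · funext x
      simp

end

end Stmt15
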